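/- (Formal solution is a generalized solution, 1D version of Theorem 4) Let 0<α<1, T>0, and let the Sturm–Liouville eigendata (λ_i, X_i) on [0,l] satisfy the stated hypotheses. Let (c_i) be real numbers with ∑_{i=1}^∞ λ_i² c_i² < ∞ and suppose u₀(x) = ∑_{i=1}^∞ c_i X_i(x) converges uniformly on [0,l]. Then: (i) the partial sums u_k(x,t) = ∑_{i=1}^k c_i E_α(−λ_i t^α) X_i(x) converge uniformly on [0,l]×[0,T] to a continuous function u; (ii) each u_k is a classical solution of (D_t^α u_k)(x,t) = ∂/∂x(p(x) ∂u_k/∂x) − q(x) u_k on (0,l)×(0,T) with u_k(0,t)=u_k(l,t)=0 and initial values u_k(x,0) = ∑_{i=1}^k c_i X_i(x); and (iii) these initial values converge uniformly on [0,l] to u₀. Hence u is a generalized solution of the initial-boundary-value problem with initial condition u₀ and zero boundary conditions. -/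

import Mathlib

open MeasureTheory Set Filter

/-- The Caputo fractional derivative of order `α` of `f` at `t`:
`(D^α f)(t) = (1/Γ(1−α)) ∫₀ᵗ (t−s)^{−α} f'(s) ds`. -/
noncomputable def caputo (α : ℝ) (f : ℝ → ℝ) (t : ℝ) : ℝ :=
  (1 / Real.Gamma (1 - α)) * ∫ s in (0:ℝ)..t, (t - s) ^ (-α) * deriv f s

/-- The two-parameter Mittag-Leffler function `E_{α,β}(z) = ∑_{k≥0} z^k/Γ(αk+β)`;
`E_α = E_{α,1}`. -/
noncomputable def ml (α β z : ℝ) : ℝ := ∑' k : ℕ, z ^ k / Real.Gamma (α * k + β)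

/-- `w` is a classical solution of the homogeneous one-dimensional time-fractional
diffusion equation `(D_t^α w)(x,t) = ∂/∂x(p(x) ∂w/∂x) − q(x)w` on `(0,l)×(0,T)` with
zero Dirichlet boundary conditions. -/
def IsClassicalSolution1D (α T l : ℝ) (p q : ℝ → ℝ) (w : ℝ → ℝ → ℝ) : Prop :=
  ContinuousOn (fun z : ℝ × ℝ => w z.1 z.2) (Set.Icc 0 l ×ˢ Set.Icc 0 T) ∧
  (∀ x ∈ Set.Ioo (0:ℝ) l, ∀ t ∈ Set.Ioo (0:ℝ) T,
    caputo α (w x) t = deriv (fun y => p y * deriv (fun z => w z t) y) x - q x * w x t) ∧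
  (∀ t ∈ Set.Icc (0:ℝ) T, w 0 t = 0 ∧ w l t = 0)

/-- `u` is a generalized solution (in the sense of Vladimirov) of the
initial-boundary-value problem with initial condition `u₀` and zero Dirichlet
boundary conditions: `u` is continuous on `[0,l]×[0,T]` and a uniform limit of
classical solutions whose initial values converge uniformly to `u₀`. -/
def IsGeneralizedSolution1D (α T l : ℝ) (p q : ℝ → ℝ) (u₀ : ℝ → ℝ)
    (u : ℝ → ℝ → ℝ) : Prop :=
  ContinuousOn (fun z : ℝ × ℝ => u z.1 z.2) (Set.Icc 0 l ×ˢ Set.Icc 0 T) ∧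
  ∃ w : ℕ → ℝ → ℝ → ℝ,
    (∀ k, IsClassicalSolution1D α T l p q (w k)) ∧
    TendstoUniformlyOn (fun k x => w k x 0) u₀ Filter.atTop (Set.Icc 0 l) ∧
    TendstoUniformlyOn (fun k (z : ℝ × ℝ) => w k z.1 z.2) (fun z : ℝ × ℝ => u z.1 z.2)
      Filter.atTop (Set.Icc 0 l ×ˢ Set.Icc 0 T)

/-!
Integrating the Mittag-Leffler series term by term against the Caputo kernel (each term is a beta
integral) shows that `t ↦ E_α(-μ t^α)` solves the relaxation equation `D_t^α f = -μ f`. At a minimum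
over `[0, t]` the Caputo derivative is nonpositive, as an integration by parts moves the derivative
onto the increasing kernel; applied to `f` and to `1 - f`, this gives `0 ≤ E_α(-μ t^α) ≤ 1`. The
formal solution is then dominated, uniformly in `t`, by the Cauchy–Schwarz inequality with weights
`λ_i c_i²` and `X_i(x)² / λ_i`: the first series converges and the second has bounded partial sums.
-/

open scoped Topology

section Gamma

lemma sub_one_rpow_mul_Gamma_le {s a : ℝ} (hs : 1 < s) (ha : 0 < a) :
    (s - 1) ^ a * Real.Gamma s ≤ Real.Gamma (s + a) := by
  have hs₁ : 0 < s - 1 := sub_pos.2 hs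
  have hG : 0 < Real.Gamma (s - 1) := Real.Gamma_pos_of_pos hs₁
  have hGamma : Real.Gamma s = (s - 1) * Real.Gamma (s - 1) := by
    rw [← Real.Gamma_add_one hs₁.ne', sub_add_cancel]
  have hslope := Real.convexOn_log_Gamma.slope_mono_adjacent (x := s - 1) (y := s) (z := s + a)
    (mem_Ioi.2 hs₁) (mem_Ioi.2 (by linarith)) (by linarith) (by linarith)
  simp only [Function.comp_apply, sub_sub_cancel, add_sub_cancel_left, div_one] at hslope
  have hlog : Real.log (s - 1) * a ≤ Real.log (Real.Gamma (s + a)) - Real.log (Real.Gamma s) := by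
    rw [← le_div_iff₀ ha]
    refine le_of_eq_of_le ?_ hslope
    rw [hGamma, Real.log_mul hs₁.ne' hG.ne', add_sub_cancel_right]
  have hGs : 0 < Real.Gamma s := Real.Gamma_pos_of_pos (by linarith)
  rw [← Real.log_le_log_iff (by positivity) (Real.Gamma_pos_of_pos (by linarith)),
    Real.log_mul (by positivity) hGs.ne', Real.log_rpow hs₁]
  linarith

lemma integral_sub_rpow_mul_rpow {a b t : ℝ} (ha : 0 < a) (hb : 0 < b) (ht : 0 < t) :
    ∫ s in (0 : ℝ)..t, (t - s) ^ (b - 1) * s ^ (a - 1) =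
      t ^ (a + b - 1) * (Real.Gamma a * Real.Gamma b / Real.Gamma (a + b)) := by
  have hbeta := Complex.betaIntegral_scaled a b ht
  rw [Complex.betaIntegral_eq_Gamma_mul_div _ _ (by simpa) (by simpa)] at hbeta
  have hcast : ∫ x in (0 : ℝ)..t, (x : ℂ) ^ ((a : ℂ) - 1) * ((t : ℂ) - x) ^ ((b : ℂ) - 1)
      = ((∫ s in (0 : ℝ)..t, (t - s) ^ (b - 1) * s ^ (a - 1) : ℝ) : ℂ) := by
    rw [← intervalIntegral.integral_ofReal]
    refine intervalIntegral.integral_congr_Ioo_of_le ht.le fun x hx => ?_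
    rw [Complex.ofReal_mul, Complex.ofReal_cpow hx.1.le, Complex.ofReal_cpow (sub_pos.2 hx.2).le]
    push_cast
    ring
  rw [hcast, ← Complex.ofReal_add, Complex.Gamma_ofReal, Complex.Gamma_ofReal,
    Complex.Gamma_ofReal, ← Complex.ofReal_one, ← Complex.ofReal_sub,
    ← Complex.ofReal_cpow ht.le] at hbeta
  exact_mod_cast hbeta

lemma intervalIntegrable_sub_rpow_mul_rpow_mul {a b t : ℝ} (ha : 0 < a) (hb : 0 < b) (ht : 0 < t)
    {g : ℝ → ℝ} (hg : Continuous g) :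
    IntervalIntegrable (fun s => (t - s) ^ (b - 1) * (s ^ (a - 1) * g s)) volume 0 t := by
  -- A nonzero Bochner integral certifies integrability.
  have hkernel : IntervalIntegrable (fun s => (t - s) ^ (b - 1) * s ^ (a - 1)) volume 0 t := by
    refine intervalIntegral.intervalIntegrable_of_integral_ne_zero ?_
    rw [integral_sub_rpow_mul_rpow ha hb ht]
    have := Real.Gamma_pos_of_pos ha
    have := Real.Gamma_pos_of_pos hb
    have := Real.Gamma_pos_of_pos (add_pos ha hb)
    positivity
  simpa only [mul_assoc] using hkernel.mul_continuousOn hg.continuousOn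

end Gamma

section MittagLeffler

variable {α : ℝ}

lemma summable_ml (hα : 0 < α) (β z : ℝ) :
    Summable fun k : ℕ => z ^ k / Real.Gamma (α * k + β) := by
  have harg : Tendsto (fun k : ℕ => α * (k : ℝ) + β) atTop atTop :=
    tendsto_atTop_add_const_right _ _ (tendsto_natCast_atTop_atTop.const_mul_atTop hα)
  have hgrowth : Tendsto (fun k : ℕ => (α * (k : ℝ) + β - 1) ^ α) atTop atTop :=
    (tendsto_rpow_atTop hα).comp (tendsto_atTop_add_const_right _ (-1) harg)
  refine summable_of_ratio_norm_eventually_le (r := 1 / 2) (by norm_num) ?_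
  filter_upwards [harg.eventually_gt_atTop 1, hgrowth.eventually_ge_atTop (2 * |z|)] with k hk hz
  set s : ℝ := α * k + β
  have hsucc : α * ((k + 1 : ℕ) : ℝ) + β = s + α := by push_cast; ring
  have hG : 0 < Real.Gamma s := Real.Gamma_pos_of_pos (by linarith)
  have hG' : 0 < Real.Gamma (s + α) := Real.Gamma_pos_of_pos (by linarith)
  have hratio : 2 * |z| * Real.Gamma s ≤ Real.Gamma (s + α) :=
    (mul_le_mul_of_nonneg_right hz hG.le).trans (sub_one_rpow_mul_Gamma_le hk hα)
  rw [hsucc, norm_div, norm_div, norm_pow, norm_pow, Real.norm_of_nonneg hG.le,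
    Real.norm_of_nonneg hG'.le, Real.norm_eq_abs, ← mul_div_assoc, div_le_div_iff₀ hG' hG]
  calc |z| ^ (k + 1) * Real.Gamma s = 1 / 2 * |z| ^ k * (2 * |z| * Real.Gamma s) := by ring
    _ ≤ 1 / 2 * |z| ^ k * Real.Gamma (s + α) := by gcongr

lemma ml_zero (α β : ℝ) : ml α β 0 = (Real.Gamma β)⁻¹ := by
  rw [ml, tsum_eq_single 0 fun k hk => by simp [hk]]
  simp

lemma hasDerivAt_ml_tsum (hα : 0 < α) (β z : ℝ) :
    HasDerivAt (ml α β) (∑' k : ℕ, k * z ^ (k - 1) / Real.Gamma (α * k + β)) z := by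
  set R : ℝ := |z| + 1
  have hR : 1 ≤ R := le_add_of_nonneg_left (abs_nonneg z)
  refine hasDerivAt_tsum_of_isPreconnected (t := Metric.ball 0 R) (y₀ := z)
    (g := fun (k : ℕ) (y : ℝ) => y ^ k / Real.Gamma (α * k + β))
    (g' := fun (k : ℕ) (y : ℝ) => k * y ^ (k - 1) / Real.Gamma (α * k + β))
    (summable_ml hα β (2 * R)).norm Metric.isOpen_ball (convex_ball _ _).isPreconnected
    (fun k y _ => (hasDerivAt_pow k y).div_const _) (fun k y hy => ?_) (by simp [R])
    (summable_ml hα β z) (by simp [R])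
  have hyR : ‖y‖ ≤ R := (mem_ball_zero_iff.1 hy).le
  rw [norm_div, norm_div, norm_mul, norm_pow, norm_pow, Real.norm_natCast,
    Real.norm_of_nonneg (by positivity : 0 ≤ 2 * R), mul_pow]
  gcongr
  · exact_mod_cast Nat.lt_two_pow_self.le
  · calc ‖y‖ ^ (k - 1) ≤ R ^ (k - 1) := by gcongr
      _ ≤ R ^ k := pow_le_pow_right₀ hR (Nat.sub_le _ _)

lemma continuous_ml (hα : 0 < α) (β : ℝ) : Continuous (ml α β) :=
  continuous_iff_continuousAt.2 fun z => (hasDerivAt_ml_tsum hα β z).continuousAt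

lemma hasDerivAt_ml_one (hα : 0 < α) (z : ℝ) : HasDerivAt (ml α 1) (ml α α z / α) z := by
  have hterm (k : ℕ) : ((k + 1 : ℕ) * z ^ (k + 1 - 1)) / Real.Gamma (α * (k + 1 : ℕ) + 1)
      = z ^ k / Real.Gamma (α * k + α) / α := by
    have harg : α * ((k + 1 : ℕ) : ℝ) = α * k + α := by push_cast; ring
    have : 0 < Real.Gamma (α * k + α) := Real.Gamma_pos_of_pos (by positivity)
    rw [Nat.add_sub_cancel, Real.Gamma_add_one (by positivity), harg, Nat.cast_succ]
    field_simp
  have hsum := (summable_ml hα α z).div_const α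
  convert hasDerivAt_ml_tsum hα 1 z using 1
  rw [tsum_eq_zero_add' (by simpa only [hterm] using hsum), ml, ← tsum_div_const]
  simp only [hterm, Nat.cast_zero, zero_mul, zero_div, zero_add]

lemma continuous_ml_mul_rpow (hα : 0 < α) (β c : ℝ) : Continuous fun t : ℝ => ml α β (c * t ^ α) :=
  (continuous_ml hα β).comp (continuous_const.mul (Real.continuous_rpow_const hα.le))

lemma hasDerivAt_ml_mul_rpow (hα : 0 < α) (c : ℝ) {t : ℝ} (ht : 0 < t) :
    HasDerivAt (fun t : ℝ => ml α 1 (c * t ^ α)) (c * (t ^ (α - 1) * ml α α (c * t ^ α))) t := by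
  have hinner : HasDerivAt (fun t : ℝ => c * t ^ α) (c * (α * t ^ (α - 1))) t :=
    (Real.hasDerivAt_rpow_const (Or.inl ht.ne')).const_mul c
  refine ((hasDerivAt_ml_one hα (c * t ^ α)).comp t hinner).congr_deriv ?_
  field_simp

lemma integral_sub_rpow_mul_ml_term (hα : 0 ≤ α) {β γ t : ℝ} (hβ : 0 < β) (hγ : 0 < γ)
    (ht : 0 < t) (c : ℝ) (k : ℕ) :
    ∫ s in (0 : ℝ)..t,
        (t - s) ^ (γ - 1) * (s ^ (β - 1) * ((c * s ^ α) ^ k / Real.Gamma (α * k + β))) =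
      Real.Gamma γ * (t ^ (β + γ - 1) * ((c * t ^ α) ^ k / Real.Gamma (α * k + (β + γ)))) := by
  have hpow {s : ℝ} (hs : 0 < s) (r : ℝ) : s ^ (r - 1) * (s ^ α) ^ k = s ^ (α * k + r - 1) := by
    rw [← Real.rpow_natCast, ← Real.rpow_mul hs.le, ← Real.rpow_add hs]
    ring_nf
  have : Real.Gamma (α * k + β) ≠ 0 := (Real.Gamma_pos_of_pos (by positivity)).ne'
  calc ∫ s in (0 : ℝ)..t,
        (t - s) ^ (γ - 1) * (s ^ (β - 1) * ((c * s ^ α) ^ k / Real.Gamma (α * k + β)))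
      = ∫ s in (0 : ℝ)..t, c ^ k / Real.Gamma (α * k + β) *
          ((t - s) ^ (γ - 1) * s ^ (α * k + β - 1)) := by
        refine intervalIntegral.integral_congr_Ioo_of_le ht.le fun s hs => ?_
        rw [← hpow hs.1, mul_pow]
        ring
    _ = c ^ k / Real.Gamma (α * k + β) * (t ^ (α * k + (β + γ) - 1) *
          (Real.Gamma (α * k + β) * Real.Gamma γ / Real.Gamma (α * k + (β + γ)))) := by
        rw [intervalIntegral.integral_const_mul,
          integral_sub_rpow_mul_rpow (by positivity) hγ ht, add_assoc]
    _ = Real.Gamma γ *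
          (t ^ (β + γ - 1) * ((c * t ^ α) ^ k / Real.Gamma (α * k + (β + γ)))) := by
        rw [← hpow ht, mul_pow]
        field_simp

lemma integral_sub_rpow_mul_ml (hα : 0 < α) {β γ t : ℝ} (hβ : 0 < β) (hγ : 0 < γ) (ht : 0 < t)
    (c : ℝ) :
    ∫ s in (0 : ℝ)..t, (t - s) ^ (γ - 1) * (s ^ (β - 1) * ml α β (c * s ^ α)) =
      Real.Gamma γ * (t ^ (β + γ - 1) * ml α (β + γ) (c * t ^ α)) := by
  set F : ℝ → ℕ → ℝ → ℝ := fun d k s =>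
    (t - s) ^ (γ - 1) * (s ^ (β - 1) * ((d * s ^ α) ^ k / Real.Gamma (α * k + β))) with hF
  have hF_integrable (k : ℕ) : IntegrableOn (F c k) (Ioc 0 t) :=
    (intervalIntegrable_iff_integrableOn_Ioc_of_le ht.le).1 <|
      intervalIntegrable_sub_rpow_mul_rpow_mul hβ hγ ht <| .div_const
        ((continuous_const.mul (Real.continuous_rpow_const hα.le)).pow k) _
  have hF_integral (d : ℝ) (k : ℕ) : ∫ s in Ioc 0 t, F d k s =
      Real.Gamma γ * (t ^ (β + γ - 1) * ((d * t ^ α) ^ k / Real.Gamma (α * k + (β + γ)))) := by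
    rw [← intervalIntegral.integral_of_le ht.le,
      integral_sub_rpow_mul_ml_term hα.le hβ hγ ht d k]
  have hF_norm (k : ℕ) : ∫ s in Ioc 0 t, ‖F c k s‖ = ∫ s in Ioc 0 t, F |c| k s := by
    refine setIntegral_congr_fun measurableSet_Ioc fun s hs => ?_
    have hG : 0 < Real.Gamma (α * k + β) := Real.Gamma_pos_of_pos (by positivity)
    have hs₀ : 0 ≤ s := hs.1.le
    have hts : 0 ≤ t - s := sub_nonneg.2 hs.2
    simp only [hF, norm_mul, norm_div, norm_pow, Real.norm_rpow_of_nonneg hts,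
      Real.norm_rpow_of_nonneg hs₀, Real.norm_of_nonneg hG.le, Real.norm_of_nonneg hts,
      Real.norm_of_nonneg hs₀, Real.norm_eq_abs c]
  have hF_summable : Summable fun k => ∫ s in Ioc 0 t, ‖F c k s‖ := by
    simp only [hF_norm, hF_integral]
    exact ((summable_ml hα (β + γ) (|c| * t ^ α)).mul_left _).mul_left _
  have hexchange := (hasSum_integral_of_summable_integral_norm hF_integrable hF_summable).tsum_eq
  simp only [hF_integral] at hexchange
  simp only [hF, tsum_mul_left] at hexchange
  rw [intervalIntegral.integral_of_le ht.le]
  exact hexchange.symm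

end MittagLeffler

section Caputo

variable {α t : ℝ} {f : ℝ → ℝ}

/-- The regularity under which the Caputo derivative of order `α` of `f` exists at `t` in the
classical sense. Differentiability at `t` is two-sided, to agree with the `deriv` in `caputo`. -/
structure CaputoDifferentiableAt (α : ℝ) (f : ℝ → ℝ) (t : ℝ) : Prop where
  continuousOn : ContinuousOn f (Icc 0 t)
  differentiableAt : ∀ s ∈ Ioc 0 t, DifferentiableAt ℝ f s
  intervalIntegrable : IntervalIntegrable (fun s => (t - s) ^ (-α) * deriv f s) volume 0 t

lemma CaputoDifferentiableAt.const_sub (hf : CaputoDifferentiableAt α f t) (a : ℝ) :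
    CaputoDifferentiableAt α (fun s => a - f s) t where
  continuousOn := continuousOn_const.sub hf.continuousOn
  differentiableAt s hs := (hf.differentiableAt s hs).const_sub a
  intervalIntegrable := by
    simp only [deriv_const_sub, mul_neg]
    exact hf.intervalIntegrable.neg

lemma caputo_const_sub (α a : ℝ) (f : ℝ → ℝ) (t : ℝ) :
    caputo α (fun s => a - f s) t = -caputo α f t := by
  simp only [caputo, deriv_const_sub, mul_neg, intervalIntegral.integral_neg]

lemma caputo_sum {ι : Type*} {S : Finset ι} {f : ι → ℝ → ℝ} (ht : 0 ≤ t)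
    (hf : ∀ i ∈ S, CaputoDifferentiableAt α (f i) t) (a : ι → ℝ) :
    caputo α (fun s => ∑ i ∈ S, a i * f i s) t = ∑ i ∈ S, a i * caputo α (f i) t := by
  have hderiv {s : ℝ} (hs : s ∈ Ioo 0 t) :
      (t - s) ^ (-α) * deriv (fun r => ∑ i ∈ S, a i * f i r) s =
        ∑ i ∈ S, a i * ((t - s) ^ (-α) * deriv (f i) s) := by
    have hd : HasDerivAt (fun r => ∑ i ∈ S, a i * f i r) (∑ i ∈ S, a i * deriv (f i) s) s :=
      .fun_sum fun i hi =>
        ((hf i hi).differentiableAt s (Ioo_subset_Ioc_self hs)).hasDerivAt.const_mul (a i)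
    rw [hd.deriv, Finset.mul_sum]
    exact Finset.sum_congr rfl fun i _ => mul_left_comm _ _ _
  rw [caputo, intervalIntegral.integral_congr_Ioo_of_le ht fun s hs => hderiv hs,
    intervalIntegral.integral_finsetSum fun i hi => (hf i hi).intervalIntegrable.const_mul (a i),
    Finset.mul_sum]
  simp only [caputo, intervalIntegral.integral_const_mul]
  exact Finset.sum_congr rfl fun i _ => mul_left_comm _ _ _

lemma intervalIntegrable_deriv_of_sub_rpow_mul {b : ℝ} (hb : b ∈ Ioo 0 t)
    (hf : IntervalIntegrable (fun s => (t - s) ^ (-α) * deriv f s) volume 0 t) :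
    IntervalIntegrable (deriv f) volume 0 b := by
  have hpos {s : ℝ} (hs : s ≤ b) : 0 < t - s := sub_pos.2 (hs.trans_lt hb.2)
  have hpow : ContinuousOn (fun s => (t - s) ^ α) (uIcc 0 b) := by
    rw [uIcc_of_le hb.1.le]
    exact (continuousOn_const.sub continuousOn_id).rpow_const fun s hs => Or.inl (hpos hs.2).ne'
  have hsub : uIcc 0 b ⊆ uIcc 0 t :=
    uIcc_subset_uIcc left_mem_uIcc (mem_uIcc_of_le hb.1.le hb.2.le)
  refine ((hf.mono_set hsub).continuousOn_mul hpow).congr fun s hs => ?_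
  rw [uIoc_of_le hb.1.le] at hs
  rw [← mul_assoc, ← Real.rpow_add (hpos hs.2), add_neg_cancel, Real.rpow_zero, one_mul]

lemma integral_sub_rpow_mul_deriv_le (hα : 0 ≤ α) {b : ℝ} (hb : b ∈ Ioo 0 t)
    (hf : CaputoDifferentiableAt α f t) (hmin : IsMinOn f (Icc 0 t) t) :
    ∫ s in (0 : ℝ)..b, (t - s) ^ (-α) * deriv f s ≤ (t - b) ^ (-α) * (f b - f t) := by
  have hsub : Icc 0 b ⊆ Icc 0 t := Icc_subset_Icc_right hb.2.le
  have hpos {s : ℝ} (hs : s ≤ b) : 0 < t - s := sub_pos.2 (hs.trans_lt hb.2)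
  have hdiff {s : ℝ} (hs : s ∈ Icc 0 t) : 0 ≤ f s - f t := sub_nonneg.2 (hmin hs)
  have hu : uIcc 0 b = Icc 0 b := uIcc_of_le hb.1.le
  have hpow (r : ℝ) : ContinuousOn (fun s => (t - s) ^ r) (uIcc 0 b) := by
    rw [hu]
    exact (continuousOn_const.sub continuousOn_id).rpow_const fun s hs => Or.inl (hpos hs.2).ne'
  have hparts : ∫ s in (0 : ℝ)..b, (t - s) ^ (-α) * deriv f s =
      (t - b) ^ (-α) * (f b - f t) - (t - 0) ^ (-α) * (f 0 - f t) -
        ∫ s in (0 : ℝ)..b, α * (t - s) ^ (-α - 1) * (f s - f t) := by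
    refine intervalIntegral.integral_mul_deriv_eq_deriv_mul_of_hasDerivAt (hpow _)
      (hu ▸ (hf.continuousOn.mono hsub).sub continuousOn_const) (fun s hs => ?_) (fun s hs => ?_)
      ((hpow _).const_mul α).intervalIntegrable
      (intervalIntegrable_deriv_of_sub_rpow_mul hb hf.intervalIntegrable)
    all_goals rw [min_eq_left hb.1.le, max_eq_right hb.1.le] at hs
    · refine (((hasDerivAt_id s).const_sub t).rpow_const (Or.inl (hpos hs.2.le).ne')).congr_deriv ?_
      simp
    · exact (hf.differentiableAt s ⟨hs.1, (hs.2.trans hb.2).le⟩).hasDerivAt.sub_const _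
  have hbdry : 0 ≤ (t - 0) ^ (-α) * (f 0 - f t) :=
    mul_nonneg (Real.rpow_nonneg (hpos hb.1.le).le _)
      (hdiff (left_mem_Icc.2 (hb.1.trans hb.2).le))
  have hintegral : 0 ≤ ∫ s in (0 : ℝ)..b, α * (t - s) ^ (-α - 1) * (f s - f t) :=
    intervalIntegral.integral_nonneg hb.1.le fun s hs =>
      mul_nonneg (mul_nonneg hα (Real.rpow_nonneg (hpos hs.2).le _)) (hdiff (hsub hs))
  linarith

lemma tendsto_sub_rpow_mul_sub_nhdsLT (hα : α < 1) (hf : DifferentiableAt ℝ f t) :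
    Tendsto (fun b => (t - b) ^ (-α) * (f b - f t)) (𝓝[<] t) (𝓝 0) := by
  have hslope : Tendsto (slope f t) (𝓝[<] t) (𝓝 (deriv f t)) :=
    (hasDerivAt_iff_tendsto_slope.1 hf.hasDerivAt).mono_left
      (nhdsWithin_mono t fun x hx => ne_of_lt hx)
  have hpow : Tendsto (fun b : ℝ => (t - b) ^ (1 - α)) (𝓝[<] t) (𝓝 0) := by
    have hcont : Continuous fun b : ℝ => (t - b) ^ (1 - α) :=
      (continuous_const.sub continuous_id).rpow_const fun _ => Or.inr (sub_pos.2 hα).le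
    refine (hcont.tendsto' t 0 ?_).mono_left nhdsWithin_le_nhds
    rw [sub_self, Real.zero_rpow (sub_pos.2 hα).ne']
  have hprod := (hpow.mul hslope).neg
  rw [zero_mul, neg_zero] at hprod
  refine hprod.congr' ?_
  filter_upwards [self_mem_nhdsWithin] with b (hb : b < t)
  have hpos : 0 < t - b := sub_pos.2 hb
  have hne : b - t ≠ 0 := (sub_neg.2 hb).ne
  rw [slope_def_field, sub_eq_neg_add 1 α, Real.rpow_add hpos, Real.rpow_one]
  field_simp
  ring

theorem caputo_nonpos_of_isMinOn (hα : 0 ≤ α) (hα1 : α < 1) (ht : 0 < t)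
    (hf : CaputoDifferentiableAt α f t) (hmin : IsMinOn f (Icc 0 t) t) :
    caputo α f t ≤ 0 := by
  have hprimitive : Tendsto (fun b => ∫ s in (0 : ℝ)..b, (t - s) ^ (-α) * deriv f s) (𝓝[<] t)
      (𝓝 (∫ s in (0 : ℝ)..t, (t - s) ^ (-α) * deriv f s)) := by
    have hintegrable :=
      (intervalIntegrable_iff_integrableOn_Icc_of_le ht.le).1 hf.intervalIntegrable
    rw [← uIcc_of_le ht.le] at hintegrable
    have hcont := intervalIntegral.continuousOn_primitive_interval hintegrable
    rw [uIcc_of_le ht.le] at hcont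
    have hIoo := (hcont t (right_mem_Icc.2 ht.le)).mono Ioo_subset_Icc_self
    rwa [ContinuousWithinAt, nhdsWithin_Ioo_eq_nhdsLT ht] at hIoo
  have hintegral : ∫ s in (0 : ℝ)..t, (t - s) ^ (-α) * deriv f s ≤ 0 := by
    refine le_of_tendsto_of_tendsto hprimitive
      (tendsto_sub_rpow_mul_sub_nhdsLT hα1 (hf.differentiableAt t (right_mem_Ioc.2 ht))) ?_
    filter_upwards [Ioo_mem_nhdsLT ht] with b hb
    exact integral_sub_rpow_mul_deriv_le hα hb hf hmin
  exact mul_nonpos_of_nonneg_of_nonpos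
    (one_div_nonneg.2 (Real.Gamma_pos_of_pos (sub_pos.2 hα1)).le) hintegral

theorem nonneg_of_caputo_add_mul_nonneg (hα : 0 ≤ α) (hα1 : α < 1) {μ : ℝ} (hμ : 0 < μ)
    (hf : ∀ t > 0, CaputoDifferentiableAt α f t) (hf₀ : 0 ≤ f 0)
    (h : ∀ t > 0, 0 ≤ caputo α f t + μ * f t) (ht : 0 ≤ t) : 0 ≤ f t := by
  rcases ht.eq_or_lt with rfl | ht'
  · exact hf₀
  obtain ⟨m, hm, hmin⟩ := isCompact_Icc.exists_isMinOn (nonempty_Icc.2 ht) (hf t ht').continuousOn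
  refine le_trans ?_ (hmin (right_mem_Icc.2 ht))
  rcases hm.1.eq_or_lt with rfl | hm₀
  · exact hf₀
  have hcaputo := caputo_nonpos_of_isMinOn hα hα1 hm₀ (hf m hm₀)
    (hmin.on_subset (Icc_subset_Icc_right hm.2))
  exact nonneg_of_mul_nonneg_right (by linarith [h m hm₀]) hμ

end Caputo

section Relaxation

variable {α : ℝ}

lemma sub_rpow_mul_deriv_ml_mul_rpow (hα : 0 < α) (c t : ℝ) {s : ℝ} (hs : 0 < s) :
    (t - s) ^ (-α) * deriv (fun r => ml α 1 (c * r ^ α)) s =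
      c * ((t - s) ^ (1 - α - 1) * (s ^ (α - 1) * ml α α (c * s ^ α))) := by
  rw [(hasDerivAt_ml_mul_rpow hα c hs).deriv, sub_sub_cancel_left, mul_left_comm]

lemma caputoDifferentiableAt_ml (hα : 0 < α) (hα1 : α < 1) (c : ℝ) {t : ℝ} (ht : 0 < t) :
    CaputoDifferentiableAt α (fun s => ml α 1 (c * s ^ α)) t where
  continuousOn := (continuous_ml_mul_rpow hα 1 c).continuousOn
  differentiableAt s hs := (hasDerivAt_ml_mul_rpow hα c hs.1).differentiableAt
  intervalIntegrable := by
    have hint := (intervalIntegrable_sub_rpow_mul_rpow_mul hα (sub_pos.2 hα1) ht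
      (continuous_ml_mul_rpow hα α c)).const_mul c
    refine hint.congr fun s hs => ?_
    rw [uIoc_of_le ht.le] at hs
    exact (sub_rpow_mul_deriv_ml_mul_rpow hα c t hs.1).symm

theorem caputo_ml (hα : 0 < α) (hα1 : α < 1) (c : ℝ) {t : ℝ} (ht : 0 < t) :
    caputo α (fun s => ml α 1 (c * s ^ α)) t = c * ml α 1 (c * t ^ α) := by
  have : Real.Gamma (1 - α) ≠ 0 := (Real.Gamma_pos_of_pos (sub_pos.2 hα1)).ne'
  rw [caputo, intervalIntegral.integral_congr_Ioo_of_le ht.le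
      fun s hs => sub_rpow_mul_deriv_ml_mul_rpow hα c t hs.1,
    intervalIntegral.integral_const_mul, integral_sub_rpow_mul_ml hα hα (sub_pos.2 hα1) ht,
    add_sub_cancel, sub_self, Real.rpow_zero]
  field_simp

lemma ml_mul_zero_rpow (hα : α ≠ 0) (c : ℝ) : ml α 1 (c * 0 ^ α) = 1 := by
  rw [Real.zero_rpow hα, mul_zero, ml_zero, Real.Gamma_one, inv_one]

theorem ml_neg_mul_rpow_mem_Icc (hα : 0 < α) (hα1 : α < 1) {μ : ℝ} (hμ : 0 < μ) {t : ℝ}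
    (ht : 0 ≤ t) : ml α 1 (-μ * t ^ α) ∈ Icc 0 1 := by
  set E : ℝ → ℝ := fun s => ml α 1 (-μ * s ^ α)
  have hE₀ : E 0 = 1 := ml_mul_zero_rpow hα.ne' (-μ)
  have hE : ∀ s > 0, CaputoDifferentiableAt α E s := fun s hs =>
    caputoDifferentiableAt_ml hα hα1 (-μ) hs
  have hcaputo {s : ℝ} (hs : 0 < s) : caputo α E s = -μ * E s := caputo_ml hα hα1 (-μ) hs
  constructor
  · refine nonneg_of_caputo_add_mul_nonneg (f := E) hα.le hα1 hμ hE (hE₀ ▸ zero_le_one)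
      (fun s hs => ?_) ht
    rw [hcaputo hs, neg_mul, neg_add_cancel]
  · refine sub_nonneg.1 <| nonneg_of_caputo_add_mul_nonneg (f := fun s => 1 - E s) hα.le hα1 hμ
      (fun s hs => (hE s hs).const_sub 1) (sub_nonneg.2 hE₀.le) (fun s hs => ?_) ht
    rw [caputo_const_sub, hcaputo hs]
    linarith

end Relaxation

section UniformConvergence

variable {γ : Type*} {K : Set γ} {A : ℕ → ℝ} {B F : ℕ → γ → ℝ} {C : ℝ}

lemma uniformCauchySeqOn_sum_of_sq_le_mul (hA : Summable A) (hA₀ : ∀ i, 0 ≤ A i)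
    (hB₀ : ∀ i, ∀ x ∈ K, 0 ≤ B i x) (hB : ∀ x ∈ K, ∀ N, ∑ i ∈ Finset.range N, B i x ≤ C)
    (hF : ∀ i, ∀ x ∈ K, F i x ^ 2 ≤ A i * B i x) :
    UniformCauchySeqOn (fun N x => ∑ i ∈ Finset.range N, F i x) atTop K := by
  rw [Metric.uniformCauchySeqOn_iff]
  intro ε hε
  obtain ⟨N, hN⟩ := Metric.cauchySeq_iff.1 hA.hasSum.tendsto_sum_nat.cauchySeq
    (ε ^ 2 / (|C| + 1)) (by positivity)
  refine ⟨N, fun m hm n hn x hx => ?_⟩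
  wlog hmn : m ≤ n generalizing m n
  · rw [dist_comm]
    exact this n hn m hm (le_of_not_ge hmn)
  have hA_small : ∑ i ∈ Finset.Ico m n, A i < ε ^ 2 / (|C| + 1) := by
    rw [Finset.sum_Ico_eq_sub _ hmn]
    exact (le_abs_self _).trans_lt (hN n hn m hm)
  have hB_bdd : ∑ i ∈ Finset.Ico m n, B i x ≤ |C| + 1 := calc
    ∑ i ∈ Finset.Ico m n, B i x ≤ ∑ i ∈ Finset.range n, B i x :=
      Finset.sum_le_sum_of_subset_of_nonneg
        (by rw [Finset.range_eq_Ico]; exact Finset.Ico_subset_Ico_left m.zero_le)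
        fun i _ _ => hB₀ i x hx
    _ ≤ |C| + 1 := by linarith [hB x hx n, le_abs_self C]
  have hsq : (∑ i ∈ Finset.Ico m n, F i x) ^ 2 < ε ^ 2 := calc
    (∑ i ∈ Finset.Ico m n, F i x) ^ 2
      ≤ (∑ i ∈ Finset.Ico m n, A i) * ∑ i ∈ Finset.Ico m n, B i x :=
        Finset.sum_sq_le_sum_mul_sum_of_sq_le_mul _ (fun i _ => hA₀ i) (fun i _ => hB₀ i x hx)
          fun i _ => hF i x hx
    _ ≤ (∑ i ∈ Finset.Ico m n, A i) * (|C| + 1) :=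
        mul_le_mul_of_nonneg_left hB_bdd (Finset.sum_nonneg fun i _ => hA₀ i)
    _ < ε ^ 2 := (lt_div_iff₀ (by positivity)).1 hA_small
  rw [dist_comm, Real.dist_eq, ← Finset.sum_Ico_eq_sub _ hmn]
  exact abs_lt_of_sq_lt_sq hsq hε.le

theorem tendstoUniformlyOn_sum_of_sq_le_mul (hA : Summable A) (hA₀ : ∀ i, 0 ≤ A i)
    (hB₀ : ∀ i, ∀ x ∈ K, 0 ≤ B i x) (hB : ∀ x ∈ K, ∀ N, ∑ i ∈ Finset.range N, B i x ≤ C)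
    (hF : ∀ i, ∀ x ∈ K, F i x ^ 2 ≤ A i * B i x) :
    TendstoUniformlyOn (fun N x => ∑ i ∈ Finset.range N, F i x) (fun x => ∑' i, F i x)
      atTop K := by
  refine (uniformCauchySeqOn_sum_of_sq_le_mul hA hA₀ hB₀ hB hF).tendstoUniformlyOn_of_tendsto
    fun x hx => HasSum.tendsto_sum_nat (Summable.hasSum ?_)
  refine .of_norm_bounded (hA.add (summable_of_sum_range_le (hB₀ · x hx) (hB x hx))) fun i => ?_
  have hA_nonneg := hA₀ i
  have hB_nonneg := hB₀ i x hx
  exact abs_le_of_sq_le_sq (by nlinarith [hF i x hx]) (by positivity)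

lemma exists_forall_sum_le_of_tendstoUniformlyOn [TopologicalSpace γ] (hK : IsCompact K)
    (hBc : ∀ i, ContinuousOn (B i) K) (hB₀ : ∀ i, ∀ x ∈ K, 0 ≤ B i x) {g : γ → ℝ}
    (hB : TendstoUniformlyOn (fun N x => ∑ i ∈ Finset.range N, B i x) g atTop K) :
    ∃ C, ∀ x ∈ K, ∀ N, ∑ i ∈ Finset.range N, B i x ≤ C := by
  have hg : ContinuousOn g K := hB.continuousOn <| Frequently.of_forall fun _ =>
    continuousOn_finsetSum _ fun i _ => hBc i
  obtain ⟨C, hC⟩ := hK.bddAbove_image hg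
  refine ⟨C, fun x hx N => le_trans ?_ (hC (mem_image_of_mem g hx))⟩
  exact sum_le_hasSum _ (fun i _ => hB₀ i x hx)
    ((hasSum_iff_tendsto_nat_of_nonneg (hB₀ · x hx) _).2 (hB.tendsto_at hx))

lemma summable_mul_of_summable_sq_mul {w a : ℕ → ℝ} (hw : Tendsto w atTop atTop)
    (ha : ∀ i, 0 ≤ a i) (h : Summable fun i => w i ^ 2 * a i) : Summable fun i => w i * a i := by
  refine .of_norm_bounded_eventually_nat h ?_
  filter_upwards [hw.eventually_ge_atTop 1] with i hi
  rw [Real.norm_of_nonneg (mul_nonneg (zero_le_one.trans hi) (ha i))]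
  exact mul_le_mul_of_nonneg_right (le_self_pow₀ hi two_ne_zero) (ha i)

theorem tendstoUniformlyOn_sum_mul_ml {α : ℝ} (hα : 0 < α) (hα1 : α < 1) {lam c : ℕ → ℝ}
    {X : ℕ → γ → ℝ} (hlam : ∀ i, 0 < lam i) (hc : Summable fun i => lam i * c i ^ 2)
    (hX : ∀ x ∈ K, ∀ N, ∑ i ∈ Finset.range N, X i x ^ 2 / lam i ≤ C) :
    TendstoUniformlyOn
      (fun N (z : γ × ℝ) => ∑ i ∈ Finset.range N, c i * ml α 1 (-lam i * z.2 ^ α) * X i z.1)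
      (fun z => ∑' i, c i * ml α 1 (-lam i * z.2 ^ α) * X i z.1) atTop (K ×ˢ Ici 0) := by
  refine tendstoUniformlyOn_sum_of_sq_le_mul (B := fun i z => X i z.1 ^ 2 / lam i) hc
    (fun i => mul_nonneg (hlam i).le (sq_nonneg _))
    (fun i z _ => div_nonneg (sq_nonneg _) (hlam i).le) (fun z hz => hX z.1 hz.1) fun i z hz => ?_
  obtain ⟨hE₀, hE₁⟩ := ml_neg_mul_rpow_mem_Icc hα hα1 (hlam i) hz.2
  have hi : lam i ≠ 0 := (hlam i).ne'
  calc (c i * ml α 1 (-lam i * z.2 ^ α) * X i z.1) ^ 2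
      = ml α 1 (-lam i * z.2 ^ α) ^ 2 * (c i * X i z.1) ^ 2 := by ring
    _ ≤ (c i * X i z.1) ^ 2 := mul_le_of_le_one_left (sq_nonneg _) (pow_le_one₀ hE₀ hE₁)
    _ = lam i * c i ^ 2 * (X i z.1 ^ 2 / lam i) := by field_simp

end UniformConvergence

section SturmLiouville

variable {l : ℝ} {p q : ℝ → ℝ}

/-- `φ` solves the Sturm–Liouville eigenvalue problem `-(p φ')' + q φ = μ φ` on `(0, l)` with
Dirichlet boundary conditions. The zero function is allowed. -/
structure IsDirichletEigenfunction (l : ℝ) (p q : ℝ → ℝ) (μ : ℝ) (φ : ℝ → ℝ) : Prop where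
  continuousOn : ContinuousOn φ (Icc 0 l)
  differentiableAt : ∀ x ∈ Ioo 0 l, DifferentiableAt ℝ φ x
  differentiableAt_flux : ∀ x ∈ Ioo 0 l, DifferentiableAt ℝ (fun y => p y * deriv φ y) x
  eigen_eq : ∀ x ∈ Ioo 0 l, -(deriv (fun y => p y * deriv φ y) x) + q x * φ x = μ * φ x
  left_eq_zero : φ 0 = 0
  right_eq_zero : φ l = 0

lemma IsDirichletEigenfunction.of_contDiffOn {μ : ℝ} {φ : ℝ → ℝ}
    (hp : ContDiffOn ℝ 1 p (Icc 0 l)) (hφ : ContDiffOn ℝ 2 φ (Icc 0 l))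
    (heig : ∀ x ∈ Ioo 0 l, -(deriv (fun y => p y * deriv φ y) x) + q x * φ x = μ * φ x)
    (hφ₀ : φ 0 = 0) (hφl : φ l = 0) : IsDirichletEigenfunction l p q μ φ where
  continuousOn := hφ.continuousOn
  differentiableAt x hx := (hφ.contDiffAt (Icc_mem_nhds hx.1 hx.2)).differentiableAt two_ne_zero
  differentiableAt_flux x hx := by
    have hderiv : ContDiffOn ℝ 1 (deriv φ) (Ioo 0 l) :=
      (hφ.mono Ioo_subset_Icc_self).deriv_of_isOpen isOpen_Ioo (by norm_num)
    exact ((hp.contDiffAt (Icc_mem_nhds hx.1 hx.2)).differentiableAt one_ne_zero).mul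
      ((hderiv.contDiffAt (isOpen_Ioo.mem_nhds hx)).differentiableAt one_ne_zero)
  eigen_eq := heig
  left_eq_zero := hφ₀
  right_eq_zero := hφl

variable {ι : Type*} {S : Finset ι} {φ : ι → ℝ → ℝ} {μ : ι → ℝ}

lemma deriv_mul_deriv_sum {x : ℝ} (hφ : ∀ i ∈ S, ∀ᶠ y in 𝓝 x, DifferentiableAt ℝ (φ i) y)
    (hpφ : ∀ i ∈ S, DifferentiableAt ℝ (fun y => p y * deriv (φ i) y) x) (a : ι → ℝ) :
    deriv (fun y => p y * deriv (fun z => ∑ i ∈ S, a i * φ i z) y) x =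
      ∑ i ∈ S, a i * deriv (fun y => p y * deriv (φ i) y) x := by
  have hflux : (fun y => p y * deriv (fun z => ∑ i ∈ S, a i * φ i z) y) =ᶠ[𝓝 x]
      fun y => ∑ i ∈ S, a i * (p y * deriv (φ i) y) := by
    filter_upwards [(Filter.eventually_all_finset S).2 hφ] with y hy
    have hd : HasDerivAt (fun z => ∑ i ∈ S, a i * φ i z) (∑ i ∈ S, a i * deriv (φ i) y) y :=
      .fun_sum fun i hi => (hy i hi).hasDerivAt.const_mul (a i)
    rw [hd.deriv, Finset.mul_sum]
    exact Finset.sum_congr rfl fun i _ => mul_left_comm _ _ _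
  rw [hflux.deriv_eq]
  exact (HasDerivAt.fun_sum fun i hi => (hpφ i hi).hasDerivAt.const_mul (a i)).deriv

lemma sturmLiouville_sum (hφ : ∀ i ∈ S, IsDirichletEigenfunction l p q (μ i) (φ i)) (a : ι → ℝ)
    {x : ℝ} (hx : x ∈ Ioo 0 l) :
    deriv (fun y => p y * deriv (fun z => ∑ i ∈ S, a i * φ i z) y) x -
      q x * ∑ i ∈ S, a i * φ i x = -∑ i ∈ S, a i * (μ i * φ i x) := by
  rw [deriv_mul_deriv_sum
    (fun i hi => eventually_of_mem (Ioo_mem_nhds hx.1 hx.2) (hφ i hi).differentiableAt)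
    (fun i hi => (hφ i hi).differentiableAt_flux x hx), Finset.mul_sum, ← Finset.sum_sub_distrib,
    ← Finset.sum_neg_distrib]
  refine Finset.sum_congr rfl fun i hi => ?_
  linear_combination -a i * (hφ i hi).eigen_eq x hx

theorem isClassicalSolution1D_sum {α : ℝ} (hα : 0 < α) (hα1 : α < 1) (T : ℝ)
    (hφ : ∀ i ∈ S, IsDirichletEigenfunction l p q (μ i) (φ i)) (c : ι → ℝ) :
    IsClassicalSolution1D α T l p q
      (fun x t => ∑ i ∈ S, c i * ml α 1 (-μ i * t ^ α) * φ i x) := by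
  refine ⟨continuousOn_finsetSum _ fun i hi => ?_, fun x hx t ht => ?_, fun t _ => ⟨?_, ?_⟩⟩
  · have hE : Continuous fun z : ℝ × ℝ => c i * ml α 1 (-μ i * z.2 ^ α) :=
      continuous_const.mul ((continuous_ml_mul_rpow hα 1 (-μ i)).comp continuous_snd)
    exact hE.continuousOn.mul ((hφ i hi).continuousOn.comp continuousOn_fst fun z hz => hz.1)
  · have hcaputo := caputo_sum ht.1.le (fun i (_ : i ∈ S) =>
      caputoDifferentiableAt_ml hα hα1 (-μ i) ht.1) (fun i => c i * φ i x)
    simp only [mul_right_comm (c _) (φ _ x)] at hcaputo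
    rw [hcaputo, sturmLiouville_sum hφ (fun i => c i * ml α 1 (-μ i * t ^ α)) hx,
      ← Finset.sum_neg_distrib]
    refine Finset.sum_congr rfl fun i _ => ?_
    rw [caputo_ml hα hα1 (-μ i) ht.1]
    ring
  · exact Finset.sum_eq_zero fun i hi => by rw [(hφ i hi).left_eq_zero, mul_zero]
  · exact Finset.sum_eq_zero fun i hi => by rw [(hφ i hi).right_eq_zero, mul_zero]

end SturmLiouville

theorem formal_solution_is_generalized_1d_general {α l C : ℝ} (hα : 0 < α) (hα1 : α < 1) (T : ℝ)
    {p q : ℝ → ℝ} {lam : ℕ → ℝ} {X : ℕ → ℝ → ℝ} (hlam : ∀ i, 0 < lam i)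
    (hX : ∀ i, IsDirichletEigenfunction l p q (lam i) (X i))
    (hbound : ∀ x ∈ Icc 0 l, ∀ N, ∑ i ∈ Finset.range N, X i x ^ 2 / lam i ≤ C)
    {c : ℕ → ℝ} (hc : Summable fun i => lam i * c i ^ 2) {u₀ : ℝ → ℝ}
    (hu₀ : ∀ x ∈ Icc 0 l,
      Tendsto (fun N => ∑ i ∈ Finset.range N, c i * X i x) atTop (𝓝 (u₀ x))) :
    let uk : ℕ → ℝ → ℝ → ℝ := fun k x t =>
      ∑ i ∈ Finset.range k, c i * ml α 1 (-lam i * t ^ α) * X i x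
    let u : ℝ → ℝ → ℝ := fun x t => ∑' i, c i * ml α 1 (-lam i * t ^ α) * X i x
    TendstoUniformlyOn (fun k (z : ℝ × ℝ) => uk k z.1 z.2) (fun z : ℝ × ℝ => u z.1 z.2) atTop
      (Icc 0 l ×ˢ Icc 0 T) ∧
    ContinuousOn (fun z : ℝ × ℝ => u z.1 z.2) (Icc 0 l ×ˢ Icc 0 T) ∧
    (∀ k, IsClassicalSolution1D α T l p q (uk k) ∧
      ∀ x ∈ Icc (0 : ℝ) l, uk k x 0 = ∑ i ∈ Finset.range k, c i * X i x) ∧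
    TendstoUniformlyOn (fun k x => uk k x 0) u₀ atTop (Icc 0 l) ∧
    IsGeneralizedSolution1D α T l p q u₀ u := by
  intro uk u
  have hinit (k : ℕ) (x : ℝ) : uk k x 0 = ∑ i ∈ Finset.range k, c i * X i x := by
    simp only [uk, ml_mul_zero_rpow hα.ne', mul_one]
  have hunif := tendstoUniformlyOn_sum_mul_ml hα hα1 hlam hc hbound
  have hunifT : TendstoUniformlyOn (fun k (z : ℝ × ℝ) => uk k z.1 z.2)
      (fun z : ℝ × ℝ => u z.1 z.2) atTop (Icc 0 l ×ˢ Icc 0 T) :=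
    hunif.mono (prod_mono_right Icc_subset_Ici_self)
  have hclassical (k : ℕ) : IsClassicalSolution1D α T l p q (uk k) :=
    isClassicalSolution1D_sum hα hα1 T (fun i _ => hX i) c
  have hcont : ContinuousOn (fun z : ℝ × ℝ => u z.1 z.2) (Icc 0 l ×ˢ Icc 0 T) :=
    hunifT.continuousOn (Frequently.of_forall fun k => (hclassical k).1)
  have hunif₀ : TendstoUniformlyOn (fun k x => uk k x 0) (fun x => u x 0) atTop (Icc 0 l) :=
    (hunif.comp fun x => (x, 0)).mono fun x hx => ⟨hx, self_mem_Ici⟩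
  have hu : EqOn (fun x => u x 0) u₀ (Icc 0 l) := fun x hx =>
    tendsto_nhds_unique (hunif₀.tendsto_at hx) (by simpa only [hinit] using hu₀ x hx)
  have hini : TendstoUniformlyOn (fun k x => uk k x 0) u₀ atTop (Icc 0 l) := hunif₀.congr_right hu
  exact ⟨hunifT, hcont, fun k => ⟨hclassical k, fun x _ => hinit k x⟩, hini, hcont, uk, hclassical,
    hini, hunifT⟩

/-- the formal solution is a generalized solution, 1D version of
Theorem 4: with Sturm–Liouville eigendata `(λ_i, X_i)` on `[0,l]`, coefficients
with `∑ λ_i² c_i² < ∞` and `u₀ = ∑ c_i X_i` converging uniformly on `[0,l]`: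
(i) the partial sums `u_k(x,t) = ∑_{i<k} c_i E_α(−λ_i t^α) X_i(x)` converge uniformly
on `[0,l]×[0,T]` to a continuous function `u`; (ii) each `u_k` is a classical solution
with zero boundary conditions and initial values `∑_{i<k} c_i X_i`; (iii) these initial
values converge uniformly on `[0,l]` to `u₀`. Hence `u` is a generalized solution of
the initial-boundary-value problem with initial condition `u₀` and zero boundary
conditions. -/
theorem formal_solution_is_generalized_1d (α T l : ℝ)
    (hα : 0 < α) (hα1 : α < 1) (hT : 0 < T)
    (p q : ℝ → ℝ) (lam : ℕ → ℝ) (X : ℕ → ℝ → ℝ)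
    (hl : 0 < l)
    (hp : ContDiffOn ℝ 1 p (Set.Icc 0 l)) (hppos : ∀ x ∈ Set.Icc (0:ℝ) l, 0 < p x)
    (hq : ContinuousOn q (Set.Icc 0 l)) (hqnn : ∀ x ∈ Set.Icc (0:ℝ) l, 0 ≤ q x)
    (hlam : ∀ i, 0 < lam i) (hlamtop : Filter.Tendsto lam Filter.atTop Filter.atTop)
    (hX : ∀ i, ContDiffOn ℝ 2 (X i) (Set.Icc 0 l))
    (heig : ∀ i, ∀ x ∈ Set.Ioo (0:ℝ) l,
      -(deriv (fun y => p y * deriv (X i) y) x) + q x * X i x = lam i * X i x)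
    (hbc0 : ∀ i, X i 0 = 0) (hbcl : ∀ i, X i l = 0)
    (horth : ∀ i j, (∫ x in (0:ℝ)..l, X i x * X j x) = if i = j then 1 else 0)
    (hser1 : ∃ g : ℝ → ℝ, TendstoUniformlyOn
      (fun N x => ∑ i ∈ Finset.range N, (X i x) ^ 2 / lam i) g Filter.atTop
      (Set.Icc 0 l))
    (c : ℕ → ℝ) (hc : Summable fun i => lam i ^ 2 * c i ^ 2)
    (u₀ : ℝ → ℝ)
    (hu₀ : TendstoUniformlyOn (fun N x => ∑ i ∈ Finset.range N, c i * X i x) u₀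
      Filter.atTop (Set.Icc 0 l)) :
    let uk : ℕ → ℝ → ℝ → ℝ := fun k x t =>
      ∑ i ∈ Finset.range k, c i * ml α 1 (-lam i * t ^ α) * X i x
    let u : ℝ → ℝ → ℝ := fun x t => ∑' i, c i * ml α 1 (-lam i * t ^ α) * X i x
    -- (i) uniform convergence to the continuous function u
    (TendstoUniformlyOn (fun k (z : ℝ × ℝ) => uk k z.1 z.2)
      (fun z : ℝ × ℝ => u z.1 z.2) Filter.atTop (Set.Icc 0 l ×ˢ Set.Icc 0 T)) ∧
    ContinuousOn (fun z : ℝ × ℝ => u z.1 z.2) (Set.Icc 0 l ×ˢ Set.Icc 0 T) ∧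
    -- (ii) each partial sum is a classical solution with the stated initial values
    (∀ k, IsClassicalSolution1D α T l p q (uk k) ∧
      ∀ x ∈ Set.Icc (0:ℝ) l, uk k x 0 = ∑ i ∈ Finset.range k, c i * X i x) ∧
    -- (iii) the initial values converge uniformly to u₀
    (TendstoUniformlyOn (fun k x => uk k x 0) u₀ Filter.atTop (Set.Icc 0 l)) ∧
    -- hence u is a generalized solution
    IsGeneralizedSolution1D α T l p q u₀ u := by
  have heigen (i : ℕ) : IsDirichletEigenfunction l p q (lam i) (X i) :=
    .of_contDiffOn hp (hX i) (heig i) (hbc0 i) (hbcl i)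
  obtain ⟨g, hg⟩ := hser1
  obtain ⟨C, hC⟩ := exists_forall_sum_le_of_tendstoUniformlyOn isCompact_Icc
    (fun i => ((heigen i).continuousOn.pow 2).div_const (lam i))
    (fun i x _ => div_nonneg (sq_nonneg (X i x)) (hlam i).le) hg
  exact formal_solution_is_generalized_1d_general hα hα1 T hlam heigen hC
    (summable_mul_of_summable_sq_mul hlamtop (fun i => sq_nonneg (c i)) hc)
    fun _ hx => hu₀.tendsto_at hx
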